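/- Let L ≥ 3, let S be the usual step-reinforced random walk on (ℤ_L, +) with reinforcement parameter α ∈ [0,1) and step distribution μ(−1) = μ(1) = 1/2, and let (R_n)_{n≥1} be the elephant polynomials with the same parameter α. Then for every k ∈ {1,…,L−1} and every n ≥ 1, E[exp(i·2πk·S_n/L)] = R_n(cos(2kπ/L)). -/

import Mathlib

open MeasureTheory ProbabilityTheory Filter Polynomial
open scoped ENNReal NNReal Topology

namespace SRRW

variable {Ω : Type*} [MeasurableSpace Ω] {V : Type*} [AddCommGroup V] [MeasurableSpace V]

/-- The family combining `(ξ_n)`, `(u_n)` and `(g_n)`, with values in the common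
measurable space `Bool ⊕ ℕ ⊕ V`. -/
def fam (ξ : ℕ → Ω → Bool) (u : ℕ → Ω → ℕ) (g : ℕ → Ω → V) :
    (ℕ ⊕ ℕ ⊕ ℕ) → Ω → (Bool ⊕ ℕ ⊕ V)
  | .inl n => fun ω => .inl (ξ n ω)
  | .inr (.inl n) => fun ω => .inr (.inl (u n ω))
  | .inr (.inr n) => fun ω => .inr (.inr (g n ω))

/-- The driving randomness of a (generalized) step-reinforced random walk:
`(ξ_n)_{n ≥ 2}` are i.i.d. Bernoulli(α), `(u_n)_{n ≥ 2}` are independent with `u_n`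
uniform on `{1, …, n-1}`, `(g_n)_{n ≥ 1}` are i.i.d. with law `μ` (the fresh steps),
and all of them are jointly independent. -/
structure IsDriving (P : Measure Ω) (α : ℝ) (μ : Measure V)
    (ξ : ℕ → Ω → Bool) (u : ℕ → Ω → ℕ) (g : ℕ → Ω → V) : Prop where
  meas_ξ : ∀ n, Measurable (ξ n)
  meas_u : ∀ n, Measurable (u n)
  meas_g : ∀ n, Measurable (g n)
  ξ_law : ∀ n, 2 ≤ n → P {ω | ξ n ω = true} = ENNReal.ofReal α
  u_range : ∀ n, 2 ≤ n → ∀ ω, 1 ≤ u n ω ∧ u n ω < n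
  u_law : ∀ n, 2 ≤ n → ∀ k, 1 ≤ k → k < n → P {ω | u n ω = k} = ((n - 1 : ℕ) : ℝ≥0∞)⁻¹
  g_law : ∀ n, 1 ≤ n → P.map (g n) = μ
  indep : iIndepFun (fam ξ u g) P

/-- `X` is the step sequence of a generalized step-reinforced random walk (written
additively) with reinforcement parameter `α`, step distribution `μ` and transformations
`(T_n)_{n ≥ 2}`: `X_1 = g_1` and, for `n ≥ 2`, `X_n = T_n(X_{u_n})` if `ξ_n = 1` while
`X_n = g_n` (a fresh `μ`-distributed step) if `ξ_n = 0`.  Each `T_n` is a (random)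
measurable transformation of `V` which is independent of `(ξ_k)_{k ≥ n}`, `(u_k)_{k ≥ n}`
and of the fresh steps `(g_k)_{k ≥ n}`. -/
def IsGenSRRWAdd (P : Measure Ω) (α : ℝ) (μ : Measure V)
    (T : ℕ → Ω → V → V) (X : ℕ → Ω → V) : Prop :=
  ∃ ξ u g, IsDriving P α μ ξ u g ∧
    (∀ n, Measurable (Function.uncurry (T n))) ∧
    (∀ n, 2 ≤ n → IndepFun
      (fun ω (k : {k : ℕ // n ≤ k}) => (ξ k ω, u k ω, g k ω))
      (fun ω => T n ω) P) ∧
    (∀ ω, X 1 ω = g 1 ω) ∧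
    (∀ n, 2 ≤ n → ∀ ω, X n ω = if ξ n ω then T n ω (X (u n ω) ω) else g n ω)

/-- `X` is the step sequence of a usual step-reinforced random walk (all transformations
are the identity). -/
def IsSRRWAdd (P : Measure Ω) (α : ℝ) (μ : Measure V) (X : ℕ → Ω → V) : Prop :=
  IsGenSRRWAdd P α μ (fun _ _ => id) X

/-- The position of the walk: `S_n = X_1 + X_2 + ⋯ + X_n`. -/
def pos (X : ℕ → Ω → V) (n : ℕ) (ω : Ω) : V :=
  ∑ k ∈ Finset.range n, X (k + 1) ω

end SRRW

/-- The elephant polynomials: `R_1(x) = x` and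
`R_{n+1}(x) = x R_n(x) - (α/n)(1 - x²) R_n'(x)` for `n ≥ 1`. -/
noncomputable def elephantPoly (α : ℝ) : ℕ → Polynomial ℝ
  | 0 => 1
  | 1 => Polynomial.X
  | n + 2 =>
      Polynomial.X * elephantPoly α (n + 1)
        - Polynomial.C (α / (n + 1)) *
            ((1 - Polynomial.X ^ 2) * Polynomial.derivative (elephantPoly α (n + 1)))

/-!
A step `x = ±1` satisfies `exp (iθx) = cos θ + i sin θ x`. Given the past, the step `X_{n+1}` of a
`±1`-valued walk on `ℝ` is a uniformly chosen earlier step with probability `α` and a fresh one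
otherwise, so the conditional expectation of `exp (iθX_{n+1})` is `cos θ + (α / n) i sin θ S_n`.
Since the factor `i S_n` differentiates `exp (iθS_n)`, the characteristic functions `φ_n` of the
positions satisfy `φ_{n+1} = cos θ φ_n + (α / n) sin θ φ_n'`, which is the recursion of the elephant
polynomials after the substitution `φ_n = R_n ∘ cos`. A character `ψ` with `ψ (±v) = exp (±iθ)`
turns a walk with steps `±v` into such a walk on `ℝ`, evaluated at the frequency `θ`.
-/

namespace SRRW

lemma measurableEmbedding_inl {β γ : Type*} [MeasurableSpace β] [MeasurableSpace γ] :
    MeasurableEmbedding (Sum.inl : β → β ⊕ γ) :=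
  ⟨Sum.inl_injective, measurable_inl, fun _ hs => hs.inl_image⟩

lemma measurableEmbedding_inr {β γ : Type*} [MeasurableSpace β] [MeasurableSpace γ] :
    MeasurableEmbedding (Sum.inr : γ → β ⊕ γ) :=
  ⟨Sum.inr_injective, measurable_inr, fun _ hs => hs.inr_image⟩

lemma measurable_apply_of_countable {Ω ι V : Type*} {m : MeasurableSpace Ω} [MeasurableSpace ι]
    [Countable ι] [MeasurableSingletonClass ι] [MeasurableSpace V] {u : Ω → ι} {Z : ι → Ω → V}
    (hu : Measurable u) (hZ : ∀ j ∈ Set.range u, Measurable (Z j)) :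
    Measurable fun ω => Z (u ω) ω := by
  intro s hs
  have hunion : (fun ω => Z (u ω) ω) ⁻¹' s = ⋃ j ∈ Set.range u, u ⁻¹' {j} ∩ Z j ⁻¹' s := by
    ext ω
    simp only [Set.mem_iUnion, Set.mem_inter_iff, exists_prop, Set.mem_preimage,
      Set.mem_singleton_iff]
    exact ⟨fun hω => ⟨u ω, ⟨ω, rfl⟩, rfl, hω⟩, fun ⟨_, _, rfl, hω⟩ => hω⟩
  rw [hunion]
  exact .biUnion (Set.to_countable _) fun j hj =>
    (hu (measurableSet_singleton j)).inter (hZ j hj hs)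

lemma integral_apply_eq_sum_setIntegral {Ω ι E : Type*} [MeasurableSpace Ω] {P : Measure Ω}
    [MeasurableSpace ι] [MeasurableSingletonClass ι] [NormedAddCommGroup E] [NormedSpace ℝ E]
    {u : Ω → ι} {s : Finset ι} {F : ι → Ω → E} (hu : Measurable u) (hus : ∀ ω, u ω ∈ s)
    (hF : ∀ j ∈ s, Integrable (F j) P) :
    ∫ ω, F (u ω) ω ∂P = ∑ j ∈ s, ∫ ω in u ⁻¹' {j}, F j ω ∂P := by
  have hcover : ⋃ j ∈ s, u ⁻¹' {j} = Set.univ :=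
    Set.eq_univ_of_forall fun ω => Set.mem_biUnion (hus ω) rfl
  have hfiber : ∀ j, MeasurableSet (u ⁻¹' {j}) := fun j => hu (measurableSet_singleton j)
  have hon : ∀ j, Set.EqOn (fun ω => F (u ω) ω) (F j) (u ⁻¹' {j}) := by
    rintro _ ω rfl
    rfl
  rw [← setIntegral_univ, ← hcover, integral_biUnion_finset s (fun j _ => hfiber j)
    (fun i _ j _ hij => (Set.disjoint_singleton.2 hij).preimage u)
    fun j hj => (hF j hj).integrableOn.congr_fun (hon j).symm (hfiber j)]
  exact Finset.sum_congr rfl fun j _ => setIntegral_congr_fun (hfiber j) (hon j)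

section StepSequence

variable {Ω V W : Type*} [MeasurableSpace Ω] [MeasurableSpace V] [MeasurableSpace W]
  {P : Measure Ω} {α : ℝ} {μ : Measure V}
  {ξ : ℕ → Ω → Bool} {u : ℕ → Ω → ℕ} {g X : ℕ → Ω → V}

/-- `X` is the step sequence of the usual step-reinforced random walk driven by `ξ`, `u`, `g`. -/
structure IsStepSequence (ξ : ℕ → Ω → Bool) (u : ℕ → Ω → ℕ) (g X : ℕ → Ω → V) : Prop where
  one : ∀ ω, X 1 ω = g 1 ω
  of_two_le : ∀ n, 2 ≤ n → ∀ ω, X n ω = if ξ n ω then X (u n ω) ω else g n ω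

lemma isSRRWAdd_iff : IsSRRWAdd P α μ X ↔
    ∃ ξ u g, IsDriving P α μ ξ u g ∧ IsStepSequence ξ u g X := by
  constructor
  · rintro ⟨ξ, u, g, h, -, -, hone, hstep⟩
    exact ⟨ξ, u, g, h, hone, hstep⟩
  · rintro ⟨ξ, u, g, h, hX⟩
    have := h.indep.isProbabilityMeasure
    exact ⟨ξ, u, g, h, fun _ => measurable_snd, fun _ _ => indepFun_const_right _ _,
      hX.one, hX.of_two_le⟩

lemma IsDriving.map (h : IsDriving P α μ ξ u g) {e : V → W} (he : Measurable e) :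
    IsDriving P α (μ.map e) ξ u (fun n => e ∘ g n) where
  meas_ξ := h.meas_ξ
  meas_u := h.meas_u
  meas_g n := he.comp (h.meas_g n)
  ξ_law := h.ξ_law
  u_range := h.u_range
  u_law := h.u_law
  g_law n hn := by rw [← Measure.map_map he (h.meas_g n), h.g_law n hn]
  indep := by
    have hfam : fam ξ u (fun n => e ∘ g n) =
        fun i => Sum.map id (Sum.map id e) ∘ fam ξ u g i := by
      funext i
      rcases i with n | n | n <;> rfl
    rw [hfam]
    exact h.indep.comp _ fun _ => measurable_id.sumMap (measurable_id.sumMap he)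

/-- The map `e` need not be a homomorphism: only the steps are transformed, not the positions. -/
lemma IsSRRWAdd.map (hX : IsSRRWAdd P α μ X) {e : V → W} (he : Measurable e) :
    IsSRRWAdd P α (μ.map e) (fun n => e ∘ X n) := by
  obtain ⟨ξ, u, g, h, hX⟩ := isSRRWAdd_iff.1 hX
  refine isSRRWAdd_iff.2 ⟨ξ, u, _, h.map he, fun ω => congrArg e (hX.one ω), fun n hn ω => ?_⟩
  simp only [Function.comp_apply, hX.of_two_le n hn, apply_ite e]

lemma IsSRRWAdd.isProbabilityMeasure (hX : IsSRRWAdd P α μ X) : IsProbabilityMeasure P := by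
  obtain ⟨ξ, u, g, h, -⟩ := isSRRWAdd_iff.1 hX
  exact h.indep.isProbabilityMeasure

lemma IsSRRWAdd.map_step_one (hX : IsSRRWAdd P α μ X) : P.map (X 1) = μ := by
  obtain ⟨ξ, u, g, h, hX⟩ := isSRRWAdd_iff.1 hX
  rw [funext hX.one, h.g_law 1 le_rfl]

lemma IsSRRWAdd.ae_forall_step (hX : IsSRRWAdd P α μ X) {p : V → Prop} (hp : ∀ᵐ x ∂μ, p x) :
    ∀ᵐ ω ∂P, ∀ n, 1 ≤ n → p (X n ω) := by
  obtain ⟨ξ, u, g, h, hX⟩ := isSRRWAdd_iff.1 hX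
  have hfresh : ∀ᵐ ω ∂P, ∀ n, 1 ≤ n → p (g n ω) := by
    refine ae_all_iff.2 fun n => ?_
    by_cases hn : 1 ≤ n
    · rw [← h.g_law n hn] at hp
      filter_upwards [ae_of_ae_map (h.meas_g n).aemeasurable hp] with ω hω _ using hω
    · exact ae_of_all _ fun _ hn' => absurd hn' hn
  filter_upwards [hfresh] with ω hω n hn
  induction n using Nat.strong_induction_on with
  | _ n ih =>
    rcases hn.eq_or_lt with rfl | hn
    · exact hX.one ω ▸ hω 1 le_rfl
    · rw [hX.of_two_le n hn]
      split_ifs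
      · exact ih _ (h.u_range n hn ω).2 (h.u_range n hn ω).1
      · exact hω n hn.le

end StepSequence

section DrivingSigma

variable {Ω V : Type*} [MeasurableSpace V]
  {ξ : ℕ → Ω → Bool} {u : ℕ → Ω → ℕ} {g X : ℕ → Ω → V} {n : ℕ} {S T : Set (ℕ ⊕ ℕ ⊕ ℕ)}

/-- The σ-algebra generated by the driving variables with index in `S`. -/
abbrev drivingSigma (ξ : ℕ → Ω → Bool) (u : ℕ → Ω → ℕ) (g : ℕ → Ω → V) (S : Set (ℕ ⊕ ℕ ⊕ ℕ)) :
    MeasurableSpace Ω :=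
  ⨆ i ∈ S, MeasurableSpace.comap (fam ξ u g i) inferInstance

/-- The indices of the driving variables `ξ_k`, `u_k`, `g_k` with `k ≤ n`. -/
def pastIndices (n : ℕ) : Set (ℕ ⊕ ℕ ⊕ ℕ) :=
  {i | Sum.elim id (Sum.elim id id) i ≤ n}

lemma inl_mem_pastIndices {k : ℕ} : .inl k ∈ pastIndices n ↔ k ≤ n := Iff.rfl

lemma inr_inl_mem_pastIndices {k : ℕ} : .inr (.inl k) ∈ pastIndices n ↔ k ≤ n := Iff.rfl

lemma inr_inr_mem_pastIndices {k : ℕ} : .inr (.inr k) ∈ pastIndices n ↔ k ≤ n := Iff.rfl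

lemma measurable_fam_drivingSigma {i : ℕ ⊕ ℕ ⊕ ℕ} (hi : i ∈ S) :
    Measurable[drivingSigma ξ u g S] (fam ξ u g i) :=
  .of_comap_le (le_biSup (fun i => MeasurableSpace.comap (fam ξ u g i) inferInstance) hi)

lemma measurable_ξ_drivingSigma (hn : .inl n ∈ S) : Measurable[drivingSigma ξ u g S] (ξ n) :=
  measurableEmbedding_inl.measurable_comp_iff.1 (measurable_fam_drivingSigma hn)

lemma measurable_u_drivingSigma (hn : .inr (.inl n) ∈ S) :
    Measurable[drivingSigma ξ u g S] (u n) :=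
  (measurableEmbedding_inr.comp measurableEmbedding_inl).measurable_comp_iff.1
    (measurable_fam_drivingSigma hn)

lemma measurable_g_drivingSigma (hn : .inr (.inr n) ∈ S) :
    Measurable[drivingSigma ξ u g S] (g n) :=
  (measurableEmbedding_inr.comp measurableEmbedding_inr).measurable_comp_iff.1
    (measurable_fam_drivingSigma hn)

variable [mΩ : MeasurableSpace Ω] {P : Measure Ω} {α : ℝ} {μ : Measure V}

lemma IsDriving.measurable_fam (h : IsDriving P α μ ξ u g) (i : ℕ ⊕ ℕ ⊕ ℕ) :
    Measurable (fam ξ u g i) := by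
  rcases i with n | n | n
  · exact measurable_inl.comp (h.meas_ξ n)
  · exact measurable_inr.comp (measurable_inl.comp (h.meas_u n))
  · exact measurable_inr.comp (measurable_inr.comp (h.meas_g n))

lemma IsDriving.drivingSigma_le (h : IsDriving P α μ ξ u g) (S : Set (ℕ ⊕ ℕ ⊕ ℕ)) :
    drivingSigma ξ u g S ≤ mΩ :=
  iSup₂_le fun i _ => (h.measurable_fam i).comap_le

lemma IsDriving.indep_drivingSigma (h : IsDriving P α μ ξ u g) (hST : Disjoint S T) :
    Indep (drivingSigma ξ u g S) (drivingSigma ξ u g T) P :=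
  indep_iSup_of_disjoint (fun i => (h.measurable_fam i).comap_le) h.indep.iIndep hST

lemma IsStepSequence.measurable_step (hX : IsStepSequence ξ u g X)
    (h : IsDriving P α μ ξ u g) {k : ℕ} (hk : 1 ≤ k) (hkn : k ≤ n) :
    Measurable[drivingSigma ξ u g (pastIndices n)] (X k) := by
  induction k using Nat.strong_induction_on with
  | _ k ih =>
    have hg : Measurable[drivingSigma ξ u g (pastIndices n)] (g k) :=
      measurable_g_drivingSigma (inr_inr_mem_pastIndices.2 hkn)
    rcases hk.eq_or_lt with rfl | hk
    · rwa [funext hX.one]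
    have hξ : Measurable[drivingSigma ξ u g (pastIndices n)] (ξ k) :=
      measurable_ξ_drivingSigma (inl_mem_pastIndices.2 hkn)
    have hu : Measurable[drivingSigma ξ u g (pastIndices n)] (u k) :=
      measurable_u_drivingSigma (inr_inl_mem_pastIndices.2 hkn)
    rw [funext (hX.of_two_le k hk)]
    refine .ite (hξ (measurableSet_singleton true)) ?_ hg
    refine measurable_apply_of_countable hu ?_
    rintro _ ⟨ω, rfl⟩
    obtain ⟨hu₁, hu₂⟩ := h.u_range k hk ω
    exact ih _ hu₂ hu₁ (hu₂.le.trans hkn)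

lemma IsStepSequence.measurable_pos [AddCommGroup V] [MeasurableAdd₂ V]
    (hX : IsStepSequence ξ u g X) (h : IsDriving P α μ ξ u g) :
    Measurable[drivingSigma ξ u g (pastIndices n)] (pos X n) :=
  Finset.measurable_fun_sum _ fun _ hj =>
    hX.measurable_step h (Nat.succ_pos _) (Finset.mem_range.1 hj)

lemma IsSRRWAdd.measurable_step (hX : IsSRRWAdd P α μ X) (hn : 1 ≤ n) : Measurable (X n) := by
  obtain ⟨ξ, u, g, h, hX⟩ := isSRRWAdd_iff.1 hX
  exact (hX.measurable_step h hn le_rfl).mono (h.drivingSigma_le _) le_rfl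

lemma IsSRRWAdd.measurable_pos [AddCommGroup V] [MeasurableAdd₂ V] (hX : IsSRRWAdd P α μ X) :
    Measurable (pos X n) :=
  Finset.measurable_fun_sum _ fun j _ => hX.measurable_step (Nat.succ_pos j)

end DrivingSigma

section OneStep

variable {Ω V 𝕜 : Type*} [MeasurableSpace Ω] [MeasurableSpace V] [RCLike 𝕜]
  {P : Measure Ω} {α : ℝ} {μ : Measure V}
  {ξ : ℕ → Ω → Bool} {u : ℕ → Ω → ℕ} {g X : ℕ → Ω → V} {n : ℕ} {S T : Set (ℕ ⊕ ℕ ⊕ ℕ)}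

lemma IsDriving.integral_mul_eq_mul_integral (h : IsDriving P α μ ξ u g) (hST : Disjoint S T)
    {Y Z : Ω → 𝕜} (hY : Measurable[drivingSigma ξ u g S] Y)
    (hZ : Measurable[drivingSigma ξ u g T] Z) :
    ∫ ω, Y ω * Z ω ∂P = (∫ ω, Y ω ∂P) * ∫ ω, Z ω ∂P := by
  have hYZ : IndepFun Y Z P := (IndepFun_iff_Indep _ _ _).2 <|
    indep_of_indep_of_le (h.indep_drivingSigma hST) hY.comap_le hZ.comap_le
  exact hYZ.integral_fun_mul_eq_mul_integral
    (hY.mono (h.drivingSigma_le S) le_rfl).aestronglyMeasurable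
    (hZ.mono (h.drivingSigma_le T) le_rfl).aestronglyMeasurable

lemma IsDriving.setIntegral_eq_mul (h : IsDriving P α μ ξ u g) (hST : Disjoint S T)
    {A : Set Ω} (hA : MeasurableSet[drivingSigma ξ u g S] A)
    {Z : Ω → 𝕜} (hZ : Measurable[drivingSigma ξ u g T] Z) :
    ∫ ω in A, Z ω ∂P = P.real A * ∫ ω, Z ω ∂P := by
  have hAZ := indep_of_indep_of_le_right (h.indep_drivingSigma hST) hZ.comap_le
  rw [← RCLike.real_smul_eq_coe_mul]
  exact hAZ.setIntegral_eq_smul (f := id) (h.drivingSigma_le S)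
    (hZ.mono (h.drivingSigma_le T) le_rfl).aemeasurable hA aestronglyMeasurable_id

lemma IsDriving.real_ξ_eq_true (h : IsDriving P α μ ξ u g) (hα : 0 ≤ α) (hn : 2 ≤ n) :
    P.real (ξ n ⁻¹' {true}) = α := by
  rw [measureReal_def, ← ENNReal.toReal_ofReal hα, ← h.ξ_law n hn]
  rfl

lemma IsDriving.real_u_eq (h : IsDriving P α μ ξ u g) {j : ℕ} (hj : 1 ≤ j) (hjn : j ≤ n) :
    P.real (u (n + 1) ⁻¹' {j}) = (n : ℝ)⁻¹ := by
  have hlaw := h.u_law (n + 1) (by omega) j hj (by omega)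
  rw [Nat.add_sub_cancel] at hlaw
  rw [measureReal_def, ← ENNReal.toReal_natCast, ← ENNReal.toReal_inv, ← hlaw]
  rfl

variable {Y : Ω → 𝕜} {f : V → 𝕜} {C : ℝ}

lemma IsStepSequence.integral_mul_copied_step (hX : IsStepSequence ξ u g X)
    (h : IsDriving P α μ ξ u g) (hn : 1 ≤ n)
    (hY : Measurable[drivingSigma ξ u g (pastIndices n)] Y) (hYint : Integrable Y P)
    (hf : Measurable f) (hfC : ∀ x, ‖f x‖ ≤ C) :
    ∫ ω, Y ω * f (X (u (n + 1) ω) ω) ∂P =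
      (n : 𝕜)⁻¹ * ∑ j ∈ Finset.Ico 1 (n + 1), ∫ ω, Y ω * f (X j ω) ∂P := by
  have hfX : ∀ j ∈ Finset.Ico 1 (n + 1),
      Measurable[drivingSigma ξ u g (pastIndices n)] fun ω => f (X j ω) := fun j hj =>
    hf.comp (hX.measurable_step h (Finset.mem_Ico.1 hj).1
      (Nat.lt_succ_iff.1 (Finset.mem_Ico.1 hj).2))
  have hnew : Disjoint {.inr (.inl (n + 1))} (pastIndices n) :=
    Set.disjoint_singleton_left.2 (inr_inl_mem_pastIndices.not.2 (by omega))
  rw [integral_apply_eq_sum_setIntegral (F := fun j ω => Y ω * f (X j ω)) (h.meas_u (n + 1))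
    (fun ω => Finset.mem_Ico.2 (h.u_range (n + 1) (by omega) ω)) fun j hj =>
      hYint.mul_bdd ((hfX j hj).mono (h.drivingSigma_le _) le_rfl).aestronglyMeasurable
        (ae_of_all _ fun _ => hfC _), Finset.mul_sum]
  refine Finset.sum_congr rfl fun j hj => ?_
  have hu : MeasurableSet[drivingSigma ξ u g {.inr (.inl (n + 1))}] (u (n + 1) ⁻¹' {j}) :=
    measurable_u_drivingSigma (Set.mem_singleton _) (measurableSet_singleton j)
  obtain ⟨hj₁, hjn⟩ := Finset.mem_Ico.1 hj
  rw [h.setIntegral_eq_mul hnew hu (hY.fun_mul (hfX j hj)),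
    h.real_u_eq hj₁ (Nat.lt_succ_iff.1 hjn), RCLike.ofReal_inv, RCLike.ofReal_natCast]

lemma IsStepSequence.setIntegral_mul_copied_step (hX : IsStepSequence ξ u g X)
    (h : IsDriving P α μ ξ u g) (hα : 0 ≤ α) (hn : 1 ≤ n)
    (hY : Measurable[drivingSigma ξ u g (pastIndices n)] Y) (hf : Measurable f) :
    ∫ ω in ξ (n + 1) ⁻¹' {true}, Y ω * f (X (n + 1) ω) ∂P =
      α * ∫ ω, Y ω * f (X (u (n + 1) ω) ω) ∂P := by
  set T : Set (ℕ ⊕ ℕ ⊕ ℕ) := insert (.inr (.inl (n + 1))) (pastIndices n)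
  have hle : drivingSigma ξ u g (pastIndices n) ≤ drivingSigma ξ u g T :=
    biSup_mono fun _ => Set.mem_insert_of_mem _
  have hcopy : Measurable[drivingSigma ξ u g T] fun ω => f (X (u (n + 1) ω) ω) := by
    refine hf.comp (measurable_apply_of_countable
      (measurable_u_drivingSigma (Set.mem_insert _ _)) ?_)
    rintro _ ⟨ω, rfl⟩
    obtain ⟨hu₁, hu₂⟩ := h.u_range (n + 1) (by omega) ω
    exact (hX.measurable_step h hu₁ (Nat.lt_succ_iff.1 hu₂)).mono hle le_rfl
  have hnew : Disjoint {.inl (n + 1)} T := by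
    simp [T, inl_mem_pastIndices]
  have hξ : MeasurableSet[drivingSigma ξ u g {.inl (n + 1)}] (ξ (n + 1) ⁻¹' {true}) :=
    measurable_ξ_drivingSigma (Set.mem_singleton _) (measurableSet_singleton true)
  rw [← h.real_ξ_eq_true hα (n := n + 1) (by omega),
    ← h.setIntegral_eq_mul hnew hξ ((hY.mono hle le_rfl).fun_mul hcopy)]
  refine setIntegral_congr_fun (h.drivingSigma_le _ _ hξ) fun ω hω => ?_
  have hω : ξ (n + 1) ω = true := hω
  simp only [hX.of_two_le (n + 1) (by omega), hω, if_true]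

lemma IsStepSequence.setIntegral_mul_fresh_step (hX : IsStepSequence ξ u g X)
    (h : IsDriving P α μ ξ u g) (hα : 0 ≤ α) (hn : 1 ≤ n)
    (hY : Measurable[drivingSigma ξ u g (pastIndices n)] Y) (hf : Measurable f) :
    ∫ ω in (ξ (n + 1) ⁻¹' {true})ᶜ, Y ω * f (X (n + 1) ω) ∂P =
      (1 - α) * ((∫ ω, Y ω ∂P) * ∫ x, f x ∂μ) := by
  have := h.indep.isProbabilityMeasure
  set T : Set (ℕ ⊕ ℕ ⊕ ℕ) := insert (.inr (.inr (n + 1))) (pastIndices n)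
  have hle : drivingSigma ξ u g (pastIndices n) ≤ drivingSigma ξ u g T :=
    biSup_mono fun _ => Set.mem_insert_of_mem _
  have hfresh {S : Set (ℕ ⊕ ℕ ⊕ ℕ)} (hS : .inr (.inr (n + 1)) ∈ S) :
      Measurable[drivingSigma ξ u g S] fun ω => f (g (n + 1) ω) :=
    hf.comp (measurable_g_drivingSigma hS)
  have hnew : Disjoint {.inl (n + 1)} T := by
    simp [T, inl_mem_pastIndices]
  have hnew' : Disjoint (pastIndices n) {.inr (.inr (n + 1))} :=
    Set.disjoint_singleton_right.2 (inr_inr_mem_pastIndices.not.2 (by omega))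
  have hξ : MeasurableSet[drivingSigma ξ u g {.inl (n + 1)}] (ξ (n + 1) ⁻¹' {true})ᶜ :=
    (measurable_ξ_drivingSigma (Set.mem_singleton _) (measurableSet_singleton true)).compl
  have hlaw : ∫ x, f x ∂μ = ∫ ω, f (g (n + 1) ω) ∂P := by
    rw [← h.g_law (n + 1) (by omega),
      integral_map (h.meas_g _).aemeasurable hf.aestronglyMeasurable]
  have hprob : ((P.real (ξ (n + 1) ⁻¹' {true})ᶜ : ℝ) : 𝕜) = 1 - α := by
    rw [probReal_compl_eq_one_sub (h.meas_ξ _ (measurableSet_singleton true)),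
      h.real_ξ_eq_true hα (by omega), RCLike.ofReal_sub, RCLike.ofReal_one]
  rw [hlaw, ← h.integral_mul_eq_mul_integral hnew' hY (hfresh (Set.mem_singleton _)), ← hprob,
    ← h.setIntegral_eq_mul hnew hξ ((hY.mono hle le_rfl).fun_mul (hfresh (Set.mem_insert _ _)))]
  refine setIntegral_congr_fun (h.drivingSigma_le _ _ hξ) fun ω hω => ?_
  have hω : ξ (n + 1) ω ≠ true := hω
  simp only [hX.of_two_le (n + 1) (by omega), if_neg hω]

lemma IsStepSequence.integral_mul_step_succ (hX : IsStepSequence ξ u g X)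
    (h : IsDriving P α μ ξ u g) (hα : 0 ≤ α) (hn : 1 ≤ n)
    (hY : Measurable[drivingSigma ξ u g (pastIndices n)] Y) (hYint : Integrable Y P)
    (hf : Measurable f) (hfC : ∀ x, ‖f x‖ ≤ C) :
    ∫ ω, Y ω * f (X (n + 1) ω) ∂P =
      α * ((n : 𝕜)⁻¹ * ∑ j ∈ Finset.Ico 1 (n + 1), ∫ ω, Y ω * f (X j ω) ∂P)
        + (1 - α) * ((∫ ω, Y ω ∂P) * ∫ x, f x ∂μ) := by
  have hint : Integrable (fun ω => Y ω * f (X (n + 1) ω)) P :=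
    hYint.mul_bdd (hf.comp ((hX.measurable_step h (by omega) le_rfl).mono
      (h.drivingSigma_le _) le_rfl)).aestronglyMeasurable (ae_of_all _ fun _ => hfC _)
  rw [← integral_add_compl (h.meas_ξ (n + 1) (measurableSet_singleton true)) hint,
    hX.setIntegral_mul_copied_step h hα hn hY hf, hX.setIntegral_mul_fresh_step h hα hn hY hf,
    hX.integral_mul_copied_step h hn hY hYint hf hfC]

end OneStep

section Rademacher

/-- The uniform distribution on `{1, -1}`, as a measure on the real line. -/
noncomputable def rademacher : Measure ℝ :=
  (1 / 2 : ℝ≥0∞) • Measure.dirac 1 + (1 / 2 : ℝ≥0∞) • Measure.dirac (-1)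

lemma ae_rademacher : ∀ᵐ x ∂rademacher, x = 1 ∨ x = -1 := by
  simp [rademacher, ae_add_measure_iff]

lemma integral_rademacher {E : Type*} [NormedAddCommGroup E] [NormedSpace ℝ E] [CompleteSpace E]
    (f : ℝ → E) : ∫ x, f x ∂rademacher = (1 / 2 : ℝ) • f 1 + (1 / 2 : ℝ) • f (-1) := by
  rw [rademacher, integral_add_measure, integral_smul_measure, integral_smul_measure,
    integral_dirac, integral_dirac]
  · simp
  · exact (integrable_dirac (by simp)).smul_measure (by simp)
  · exact (integrable_dirac (by simp)).smul_measure (by simp)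

lemma charFun_rademacher (θ : ℝ) : charFun rademacher θ = Real.cos θ := by
  rw [charFun_apply_real, integral_rademacher, Complex.ofReal_cos, Complex.cos]
  simp only [Complex.real_smul]
  push_cast
  ring_nf

lemma cexp_mul_I_of_eq_one_or_eq_neg_one {x : ℝ} (hx : x = 1 ∨ x = -1) (θ : ℝ) :
    Complex.exp (θ * x * Complex.I) = Real.cos θ + Real.sin θ * Complex.I * x := by
  rcases hx with rfl | rfl
  · simp [Complex.exp_mul_I]
  · rw [show (θ : ℂ) * (-1 : ℝ) = (-θ : ℝ) by push_cast; ring, Complex.exp_mul_I]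
    simp

end Rademacher

section CharFun

lemma IsSRRWAdd.ae_norm_pos_le {Ω E : Type*} [MeasurableSpace Ω] [NormedAddCommGroup E]
    [MeasurableSpace E] {P : Measure Ω} {α C : ℝ} {μ : Measure E} {X : ℕ → Ω → E}
    (hX : IsSRRWAdd P α μ X) (hC : ∀ᵐ x ∂μ, ‖x‖ ≤ C) (n : ℕ) :
    ∀ᵐ ω ∂P, ‖pos X n ω‖ ≤ n * C := by
  filter_upwards [hX.ae_forall_step hC] with ω hω
  simpa [pos] using norm_sum_le_of_le (Finset.range n) fun j _ => hω (j + 1) (Nat.succ_pos j)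

lemma sum_cexp_step_mul_I {Ω : Type*} {X : ℕ → Ω → ℝ} {n : ℕ} {ω : Ω}
    (hω : ∀ j, 1 ≤ j → X j ω = 1 ∨ X j ω = -1) (θ : ℝ) :
    ∑ j ∈ Finset.Ico 1 (n + 1), Complex.exp (θ * X j ω * Complex.I) =
      n * Real.cos θ + Real.sin θ * Complex.I * pos X n ω := by
  rw [Finset.sum_congr rfl fun j hj =>
      cexp_mul_I_of_eq_one_or_eq_neg_one (hω j (Finset.mem_Ico.1 hj).1) θ,
    Finset.sum_add_distrib, ← Finset.mul_sum, pos, ← Complex.ofReal_sum,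
    Finset.range_eq_Ico, Finset.sum_Ico_add' (fun j => X j ω)]
  simp

lemma norm_cexp_mul_mul_I (θ x : ℝ) : ‖Complex.exp (θ * x * Complex.I)‖ = 1 := by
  rw [← Complex.ofReal_mul, Complex.norm_exp_ofReal_mul_I]

variable {Ω : Type*} [MeasurableSpace Ω] {P : Measure Ω} {α : ℝ} {X : ℕ → Ω → ℝ} {n : ℕ}

lemma integrable_cexp_mul_mul_I [IsFiniteMeasure P] {S : Ω → ℝ} (hS : Measurable S) (θ : ℝ) :
    Integrable (fun ω => Complex.exp (θ * S ω * Complex.I)) P :=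
  .of_bound (by fun_prop) 1 (ae_of_all _ fun _ => (norm_cexp_mul_mul_I θ _).le)

lemma charFun_map_apply {S : Ω → ℝ} (hS : Measurable S) (θ : ℝ) :
    charFun (P.map S) θ = ∫ ω, Complex.exp (θ * S ω * Complex.I) ∂P := by
  rw [charFun_apply_real, integral_map hS.aemeasurable (by fun_prop)]

lemma deriv_charFun_map [IsFiniteMeasure P] {S : Ω → ℝ} (hS : Measurable S) (hS₁ : MemLp S 1 P)
    (θ : ℝ) : deriv (charFun (P.map S)) θ =
      Complex.I * ∫ ω, S ω * Complex.exp (θ * S ω * Complex.I) ∂P := by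
  have hid : MemLp id (1 : ℕ) (P.map S) := by
    rw [Nat.cast_one]
    exact (memLp_map_measure_iff aestronglyMeasurable_id hS.aemeasurable).2 hS₁
  have hderiv := iteratedDeriv_charFun (t := θ) hid
  rw [iteratedDeriv_one, integral_map hS.aemeasurable (by fun_prop)] at hderiv
  simpa only [pow_one] using hderiv

lemma IsSRRWAdd.sum_integral_cexp_pos_mul_cexp_step (hX : IsSRRWAdd P α rademacher X) (θ : ℝ) :
    ∑ j ∈ Finset.Ico 1 (n + 1), ∫ ω, Complex.exp (θ * pos X n ω * Complex.I) *
        Complex.exp (θ * X j ω * Complex.I) ∂P =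
      n * Real.cos θ * charFun (P.map (pos X n)) θ +
        Real.sin θ * deriv (charFun (P.map (pos X n))) θ := by
  have := hX.isProbabilityMeasure
  have hS : MemLp (pos X n) 1 P := .of_bound hX.measurable_pos.aestronglyMeasurable _
    (hX.ae_norm_pos_le (C := 1) (ae_rademacher.mono (by rintro _ (rfl | rfl) <;> simp)) n)
  have hexp := integrable_cexp_mul_mul_I (P := P) (hX.measurable_pos (n := n)) θ
  have hSexp : Integrable (fun ω => pos X n ω * Complex.exp (θ * pos X n ω * Complex.I)) P :=
    (memLp_one_iff_integrable.1 hS).ofReal.mul_bdd hexp.aestronglyMeasurable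
      (ae_of_all _ fun _ => (norm_cexp_mul_mul_I θ _).le)
  have hstep : ∀ j ∈ Finset.Ico 1 (n + 1), Integrable (fun ω =>
      Complex.exp (θ * pos X n ω * Complex.I) * Complex.exp (θ * X j ω * Complex.I)) P :=
    fun j hj => hexp.mul_bdd (integrable_cexp_mul_mul_I
      (hX.measurable_step (Finset.mem_Ico.1 hj).1) θ).aestronglyMeasurable
      (ae_of_all _ fun _ => (norm_cexp_mul_mul_I θ _).le)
  rw [← integral_finsetSum _ hstep]
  calc ∫ ω, ∑ j ∈ Finset.Ico 1 (n + 1), Complex.exp (θ * pos X n ω * Complex.I) *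
        Complex.exp (θ * X j ω * Complex.I) ∂P
      = ∫ ω, n * Real.cos θ * Complex.exp (θ * pos X n ω * Complex.I) + Real.sin θ * Complex.I *
          (pos X n ω * Complex.exp (θ * pos X n ω * Complex.I)) ∂P := by
        refine integral_congr_ae ?_
        filter_upwards [hX.ae_forall_step ae_rademacher] with ω hω
        rw [← Finset.mul_sum, sum_cexp_step_mul_I hω]
        ring
    _ = n * Real.cos θ * charFun (P.map (pos X n)) θ +
          Real.sin θ * deriv (charFun (P.map (pos X n))) θ := by
        rw [integral_add (hexp.const_mul _) (hSexp.const_mul _), integral_const_mul,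
          integral_const_mul, charFun_map_apply hX.measurable_pos,
          deriv_charFun_map hX.measurable_pos hS]
        ring

lemma IsSRRWAdd.charFun_pos_succ (hX : IsSRRWAdd P α rademacher X) (hα : 0 ≤ α) (hn : 1 ≤ n)
    (θ : ℝ) : charFun (P.map (pos X (n + 1))) θ =
      Real.cos θ * charFun (P.map (pos X n)) θ +
        α / n * Real.sin θ * deriv (charFun (P.map (pos X n))) θ := by
  have := hX.isProbabilityMeasure
  have hmeas : Measurable fun x : ℝ => Complex.exp (θ * x * Complex.I) := by fun_prop
  have hn₀ : (n : ℂ) ≠ 0 := by exact_mod_cast Nat.one_le_iff_ne_zero.1 hn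
  obtain ⟨ξ, u, g, h, hX'⟩ := isSRRWAdd_iff.1 hX
  rw [charFun_map_apply hX.measurable_pos]
  calc ∫ ω, Complex.exp (θ * pos X (n + 1) ω * Complex.I) ∂P
      = ∫ ω, Complex.exp (θ * pos X n ω * Complex.I) *
          Complex.exp (θ * X (n + 1) ω * Complex.I) ∂P := by
        simp only [pos, Finset.sum_range_succ, Complex.ofReal_add, mul_add, add_mul,
          Complex.exp_add]
    _ = α * ((n : ℂ)⁻¹ * ∑ j ∈ Finset.Ico 1 (n + 1),
          ∫ ω, Complex.exp (θ * pos X n ω * Complex.I) *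
            Complex.exp (θ * X j ω * Complex.I) ∂P) +
        (1 - α) * (charFun (P.map (pos X n)) θ * charFun rademacher θ) := by
        rw [charFun_map_apply hX.measurable_pos, charFun_apply_real]
        exact hX'.integral_mul_step_succ h hα hn
          (hmeas.comp (hX'.measurable_pos h))
          (integrable_cexp_mul_mul_I hX.measurable_pos θ) hmeas
          fun x => (norm_cexp_mul_mul_I θ x).le
    _ = Real.cos θ * charFun (P.map (pos X n)) θ +
        α / n * Real.sin θ * deriv (charFun (P.map (pos X n))) θ := by
        rw [hX.sum_integral_cexp_pos_mul_cexp_step, charFun_rademacher]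
        field_simp
        ring

end CharFun

section ElephantPoly

lemma eval_cos_elephantPoly_succ (α : ℝ) {n : ℕ} (hn : 1 ≤ n) (θ : ℝ) :
    (elephantPoly α (n + 1)).eval (Real.cos θ) =
      Real.cos θ * (elephantPoly α n).eval (Real.cos θ) +
        α / n * Real.sin θ * deriv (fun t => (elephantPoly α n).eval (Real.cos t)) θ := by
  obtain ⟨m, rfl⟩ := Nat.exists_eq_add_of_le' hn
  have hderiv := ((elephantPoly α (m + 1)).hasDerivAt (Real.cos θ)).scomp θ (Real.hasDerivAt_cos θ)
  simp only [Function.comp_def] at hderiv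
  rw [hderiv.deriv]
  simp only [elephantPoly, eval_sub, eval_mul, eval_X, eval_C, eval_one, eval_pow, ← Real.sin_sq]
  push_cast
  ring

lemma IsSRRWAdd.charFun_pos {Ω : Type*} [MeasurableSpace Ω] {P : Measure Ω} {α : ℝ}
    {X : ℕ → Ω → ℝ} (hX : IsSRRWAdd P α rademacher X) (hα : 0 ≤ α) {n : ℕ} (hn : 1 ≤ n) (θ : ℝ) :
    charFun (P.map (pos X n)) θ = (elephantPoly α n).eval (Real.cos θ) := by
  induction n, hn using Nat.le_induction generalizing θ with
  | base =>
    have hpos : pos X 1 = X 1 := by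
      funext ω
      simp [pos]
    rw [hpos, hX.map_step_one, charFun_rademacher, elephantPoly, eval_X]
  | succ n hn ih =>
    have hdiff : DifferentiableAt ℝ (fun t => (elephantPoly α n).eval (Real.cos t)) θ :=
      (elephantPoly α n).differentiable.comp Real.differentiable_cos θ
    have hderiv : deriv (charFun (P.map (pos X n))) θ =
        (deriv (fun t => (elephantPoly α n).eval (Real.cos t)) θ : ℝ) := by
      rw [funext ih, hdiff.hasDerivAt.ofReal_comp.deriv]
    rw [hX.charFun_pos_succ hα hn, ih, hderiv, eval_cos_elephantPoly_succ α hn]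
    push_cast
    ring

end ElephantPoly

section TwoPoint

variable {V : Type*} [MeasurableSpace V] [MeasurableSingletonClass V] {μ : Measure V} {v w : V}

lemma ae_eq_or_eq_of_measure_singleton [IsProbabilityMeasure μ] (hvw : v ≠ w)
    (hv : μ {v} = 1 / 2) (hw : μ {w} = 1 / 2) : ∀ᵐ x ∂μ, x = v ∨ x = w := by
  have hpair : μ {v, w} = 1 := by
    rw [← Set.singleton_union, measure_union (Set.disjoint_singleton.2 hvw)
      (measurableSet_singleton w), hv, hw, ENNReal.add_halves]
  exact (prob_compl_eq_zero_iff ((Set.toFinite {v, w}).measurableSet)).2 hpair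

lemma map_ite_eq_rademacher [DecidableEq V] [IsProbabilityMeasure μ] (hvw : v ≠ w)
    (hv : μ {v} = 1 / 2) (hw : μ {w} = 1 / 2) :
    μ.map (fun x => if x = v then (1 : ℝ) else -1) = rademacher := by
  have hμ : μ = (1 / 2 : ℝ≥0∞) • Measure.dirac v + (1 / 2 : ℝ≥0∞) • Measure.dirac w := by
    have := (Measure.ae_eq_or_eq_iff_map_eq_dirac_add_dirac aemeasurable_id hvw).1
      (ae_eq_or_eq_of_measure_singleton hvw hv hw)
    simpa [hv, hw] using this
  have he : Measurable fun x : V => if x = v then (1 : ℝ) else -1 :=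
    .ite (measurableSet_singleton v) measurable_const measurable_const
  rw [hμ, Measure.map_add _ _ he, Measure.map_smul, Measure.map_smul, Measure.map_dirac' he,
    Measure.map_dirac' he, if_pos rfl, if_neg hvw.symm, rademacher]

end TwoPoint

section Character

lemma addChar_pos_eq_cexp {Ω V : Type*} [AddCommGroup V] (ψ : AddChar V Circle) {e : V → ℝ}
    {θ : ℝ} {X : ℕ → Ω → V} {ω : Ω}
    (hω : ∀ j, 1 ≤ j → (ψ (X j ω) : ℂ) = Complex.exp (θ * e (X j ω) * Complex.I)) (n : ℕ) :
    (ψ (pos X n ω) : ℂ) = Complex.exp (θ * pos (fun j => e ∘ X j) n ω * Complex.I) := by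
  induction n with
  | zero => simp [pos]
  | succ n ih =>
    simp only [pos, Finset.sum_range_succ] at ih ⊢
    rw [AddChar.map_add_eq_mul, Circle.coe_mul, ih, hω (n + 1) n.succ_pos, ← Complex.exp_add,
      Function.comp_apply, Complex.ofReal_add]
    ring_nf

lemma zmod_toCircle_mulShift_apply {L : ℕ} [NeZero L] (k : ℕ) (x : ZMod L) :
    (AddChar.mulShift ZMod.toCircle (k : ZMod L) x : ℂ) =
      Complex.exp (2 * Real.pi * k * x.val / L * Complex.I) := by
  rw [AddChar.mulShift_apply, ← ZMod.natCast_zmod_val x, ← Nat.cast_mul, ZMod.toCircle_natCast,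
    ZMod.natCast_zmod_val]
  push_cast
  ring_nf

lemma re_zmod_toCircle_mulShift_one {L : ℕ} [NeZero L] (hL : L ≠ 1) (k : ℕ) :
    (AddChar.mulShift ZMod.toCircle (k : ZMod L) 1 : ℂ).re = Real.cos (2 * k * Real.pi / L) := by
  rw [zmod_toCircle_mulShift_apply, ZMod.val_one'' hL, ← Complex.exp_ofReal_mul_I_re]
  push_cast
  ring_nf

end Character

end SRRW

open SRRW

theorem srrw_cycle_elephant_poly_general {Ω V : Type*} [MeasurableSpace Ω] {P : Measure Ω}
    [AddCommGroup V] [MeasurableSpace V] [MeasurableSingletonClass V] {μ : Measure V} {v : V}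
    (hv : v ≠ -v) (hμ : μ {v} = 1 / 2) (hμ' : μ {-v} = 1 / 2) {α : ℝ} (hα : 0 ≤ α)
    {X : ℕ → Ω → V} (hX : IsSRRWAdd P α μ X) (ψ : AddChar V Circle) {n : ℕ} (hn : 1 ≤ n) :
    ∫ ω, (ψ (pos X n ω) : ℂ) ∂P = ((elephantPoly α n).eval (ψ v : ℂ).re : ℝ) := by
  classical
  have := hX.isProbabilityMeasure
  have : IsProbabilityMeasure μ := hX.map_step_one ▸
    Measure.isProbabilityMeasure_map (hX.measurable_step le_rfl).aemeasurable
  let e : V → ℝ := fun x => if x = v then 1 else -1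
  have he : Measurable e := .ite (measurableSet_singleton v) measurable_const measurable_const
  have hY : IsSRRWAdd P α rademacher fun n => e ∘ X n :=
    map_ite_eq_rademacher hv hμ hμ' ▸ hX.map he
  obtain ⟨θ, hθ⟩ : ∃ θ : ℝ, Circle.exp θ = ψ v := ⟨_, Circle.exp_arg (ψ v)⟩
  have hψ : ∀ᵐ x ∂μ, (ψ x : ℂ) = Complex.exp (θ * e x * Complex.I) := by
    filter_upwards [ae_eq_or_eq_of_measure_singleton hv hμ hμ']
    rintro _ (rfl | rfl)
    · simp [e, ← hθ]
    · simp [e, hv.symm, AddChar.map_neg_eq_inv, ← hθ, ← Circle.exp_neg]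
  calc ∫ ω, (ψ (pos X n ω) : ℂ) ∂P
      = ∫ ω, Complex.exp (θ * pos (fun n => e ∘ X n) n ω * Complex.I) ∂P := by
        refine integral_congr_ae ?_
        filter_upwards [hX.ae_forall_step hψ] with ω hω
        exact addChar_pos_eq_cexp ψ hω n
    _ = ((elephantPoly α n).eval (ψ v : ℂ).re : ℝ) := by
        rw [← charFun_map_apply hY.measurable_pos, hY.charFun_pos hα hn, ← hθ, Circle.coe_exp,
          Complex.exp_ofReal_mul_I_re]

/-- **The SRRW on the cycle `ℤ_L` and the elephant polynomials.**  Let `L ≥ 3`, let `S`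
be the usual SRRW on `(ℤ_L, +)` with reinforcement parameter `α ∈ [0,1)` and step
distribution `μ(-1) = μ(1) = 1/2`, and let `(R_n)` be the elephant polynomials with the
same parameter.  Then for every `k ∈ {1, …, L-1}` and every `n ≥ 1`,
`E[exp(2πik S_n / L)] = R_n(cos(2kπ/L))`. -/
theorem srrw_cycle_elephant_poly
    (L : ℕ) (hL : 3 ≤ L)
    [MeasurableSpace (ZMod L)] [MeasurableSingletonClass (ZMod L)]
    {Ω : Type*} [MeasurableSpace Ω] (P : Measure Ω) [IsProbabilityMeasure P]
    (μ : Measure (ZMod L)) [IsProbabilityMeasure μ]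
    (hμ1 : μ {(1 : ZMod L)} = 1 / 2) (hμm1 : μ {(-1 : ZMod L)} = 1 / 2)
    (α : ℝ) (hα0 : 0 ≤ α) (hα1 : α < 1)
    (X : ℕ → Ω → ZMod L) (hX : IsSRRWAdd P α μ X)
    (k : ℕ) (hk1 : 1 ≤ k) (hkL : k ≤ L - 1) (n : ℕ) (hn : 1 ≤ n) :
    (∫ ω, Complex.exp
        (2 * (Real.pi : ℂ) * (k : ℂ) * ((pos X n ω).val : ℂ) / (L : ℂ) * Complex.I) ∂P)
      = (((elephantPoly α n).eval (Real.cos (2 * k * Real.pi / L)) : ℝ) : ℂ) := by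
  have : Fact (2 < L) := ⟨hL⟩
  have : NeZero L := ⟨by omega⟩
  have hmain := srrw_cycle_elephant_poly_general ZMod.neg_one_ne_one.symm hμ1 hμm1 hα0 hX
    (AddChar.mulShift ZMod.toCircle (k : ZMod L)) hn
  rw [re_zmod_toCircle_mulShift_one (by omega)] at hmain
  simpa only [zmod_toCircle_mulShift_apply] using hmain
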